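/- arXiv:2202.01269 — 4 statements merged into one kernel-verified Lean document; each statement's English description precedes it below -/
import Mathlib

section
/- Let T : ℝ → ℝ be a function and a, b ∈ ℝ be such that x ↦ a·T(x) + b is the cumulative distribution function of a real-valued random variable Z, and assume the law of Z belongs to the resilience family 𝒢_mean(ρ_Z) on ℝ. Let p and q be two probability distributions on ℝ (with finite first moments) such that sup_{t ∈ ℝ} |E_{X∼p}[T(X + t)] − E_{X∼q}[T(X + t)]| ≤ ε, where |a|·ε < 1. Then there exist probability distributions r_p and r_q with r_p ≤ p/(1 − |a|ε) and r_q ≤ q/(1 − |a|ε) such that E_{r_q}[X] − E_{r_p}[X] ≤ 2·ρ_Z(|a|ε). -/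
/-!
With `η = |a| ε`, the hypothesis on `T` says that the laws of `W = Z - X` under `μZ ⊗ p` and under
`μZ ⊗ q` have cumulative distribution functions within `η` of each other. Condition `μZ ⊗ p` on the
lowest `1 - η` fraction of `W`, and `μZ ⊗ q` on the highest `1 - η` fraction (randomizing at an
atom of the threshold, `exists_lower_truncation`). The first truncation is then stochastically
dominated by the second, so its mean of `W` is at most the other one; this is checked by writing
the truncated means through `∫ (s - W)⁺` and bounding these by integrals of the distribution
function (`intervalIntegral_cdf_le`). Marginals of a truncation are `η`-deletions of the original
marginals. The `X`-marginals are the required `r_p`, `r_q`, and each of the two `Z`-marginals has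
mean within `ρ_Z(η)` of the mean of `Z`, which gives the bound `2 ρ_Z(η)`.

Since the Bochner integral is `0` on non-integrable functions, resilience does not presuppose that
`Z` is integrable; it nevertheless implies it (`MeanResilient1.integrable`). For `η = 0` the two
laws of `W` coincide and `r_p = p`, `r_q = q` work.
-/


open MeasureTheory Real

noncomputable section

/-- `r` is an `η`-deletion of `p`: `r ≤ p / (1 - η)`, i.e. `r(A) ≤ p(A)/(1-η)` for all
measurable `A`. -/
def IsDeletion {α : Type*} [MeasurableSpace α] (r p : Measure α) (η : ℝ) : Prop :=
  ∀ A : Set α, MeasurableSet A → (r A).toReal ≤ (p A).toReal / (1 - η)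

/-- Membership in the resilience family `𝒢_mean(ρ)` on `ℝ`:
for every `η ∈ [0,1)` and every `η`-deletion `r` of `p`, `|E_r[X] - E_p[X]| ≤ ρ(η)`. -/
def MeanResilient1 (ρ : ℝ → ℝ) (p : Measure ℝ) : Prop :=
  ∀ η ∈ Set.Ico (0 : ℝ) 1, ∀ r : Measure ℝ, IsProbabilityMeasure r → IsDeletion r p η →
    |(∫ x, x ∂r) - (∫ x, x ∂p)| ≤ ρ η

/-- A real random variable has an `m`-quantile: a threshold `s` with `P(f < s) ≤ m ≤ P(f ≤ s)`. -/
lemma exists_quantile {Ω : Type*} [MeasurableSpace Ω] (P : Measure Ω) [IsProbabilityMeasure P]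
    {f : Ω → ℝ} (hf : Measurable f) {m : ℝ} (hm0 : 0 < m) (hm1 : m < 1) :
    ∃ s : ℝ, P.real {ω | f ω < s} ≤ m ∧ m ≤ P.real {ω | f ω ≤ s} := by
  have : IsProbabilityMeasure (P.map f) := Measure.isProbabilityMeasure_map hf.aemeasurable
  set G := ProbabilityTheory.cdf (P.map f) with hG
  set S : Set ℝ := {t | m ≤ G t} with hS
  have hne : S.Nonempty :=
    (((ProbabilityTheory.tendsto_cdf_atTop (P.map f)).eventually_const_lt hm1).exists).imp
      fun _ h => h.le
  obtain ⟨l, hl⟩ :=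
    ((ProbabilityTheory.tendsto_cdf_atBot (P.map f)).eventually_lt_const hm0).exists
  have hbdd : BddBelow S := by
    refine ⟨l, fun t ht => ?_⟩
    by_contra! h
    exact absurd (G.mono h.le) (not_le.2 (lt_of_lt_of_le hl ht))
  refine ⟨sInf S, ?_, ?_⟩
  · have h1 : P.real {ω | f ω < sInf S} = Function.leftLim G (sInf S) := by
      have h2 : P {ω | f ω < sInf S} = (P.map f) (Set.Iio (sInf S)) :=
        (Measure.map_apply hf measurableSet_Iio).symm
      rw [measureReal_def, h2, ← ProbabilityTheory.measure_cdf (P.map f),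
        StieltjesFunction.measure_Iio _ (ProbabilityTheory.tendsto_cdf_atBot _), sub_zero,
        ENNReal.toReal_ofReal]
      exact (ProbabilityTheory.cdf_nonneg _ (sInf S - 1)).trans
        (G.mono.le_leftLim (by linarith))
    rw [h1]
    refine le_of_tendsto (G.mono.tendsto_leftLim (sInf S)) ?_
    filter_upwards [self_mem_nhdsWithin] with t ht
    by_contra! h
    exact absurd (csInf_le hbdd (show t ∈ S from h.le)) (not_le.2 ht)
  · have h1 : P.real {ω | f ω ≤ sInf S} = G (sInf S) := by
      rw [hG, ProbabilityTheory.cdf_eq_real, map_measureReal_apply hf measurableSet_Iic]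
      rfl
    rw [h1]
    have hr : Filter.Tendsto G (nhdsWithin (sInf S) (Set.Ioi (sInf S))) (nhds (G (sInf S))) :=
      (G.right_continuous (sInf S)).mono Set.Ioi_subset_Ici_self
    refine ge_of_tendsto hr ?_
    filter_upwards [self_mem_nhdsWithin] with t ht
    obtain ⟨u, hu, hut⟩ := exists_lt_of_csInf_lt hne ht
    exact le_trans hu (G.mono hut.le)

/-- The lower `m`-truncation `P'` of `P` along `f`: `P` conditioned on the lowest `m`-fraction of
the values of `f`. Its density is `1/m` on `{f < s}`, `0` on `{f > s}`, and an intermediate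
constant on the possible atom `{f = s}`, so its `f`-mean is given by an expected shortfall. -/
lemma exists_lower_truncation {Ω : Type*} [MeasurableSpace Ω] (P : Measure Ω)
    [IsProbabilityMeasure P] {f : Ω → ℝ} (hf : Measurable f) (hfi : Integrable f P) {m : ℝ}
    (hm0 : 0 < m) (hm1 : m < 1) :
    ∃ (P' : Measure Ω) (s : ℝ), IsProbabilityMeasure P' ∧ P' ≤ ENNReal.ofReal (1 / m) • P ∧
      m * ∫ ω, f ω ∂P' = m * s - ∫ ω, max (s - f ω) 0 ∂P := by
  obtain ⟨s, hs1, hs2⟩ := exists_quantile P hf hm0 hm1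
  have hA : MeasurableSet {ω | f ω < s} := measurableSet_lt hf measurable_const
  have hB : MeasurableSet {ω | f ω = s} := measurableSet_eq_fun hf measurable_const
  have hsplit : P.real {ω | f ω ≤ s} = P.real {ω | f ω < s} + P.real {ω | f ω = s} := by
    rw [← measureReal_union _ hB]
    · congr 1
      ext ω
      simp [le_iff_lt_or_eq]
    · rw [Set.disjoint_left]
      intro ω h1 h2
      exact absurd h2 (ne_of_lt h1)
  -- `θ` is the fraction kept of the atom `{f = s}`; when that event is null, `θ = 0`.
  set θ : ℝ := (m - P.real {ω | f ω < s}) / P.real {ω | f ω = s} with hθ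
  have hB0 : 0 ≤ P.real {ω | f ω = s} := measureReal_nonneg
  have hθ0 : 0 ≤ θ := div_nonneg (by linarith) hB0
  have hθ1 : θ ≤ 1 := div_le_one_of_le₀ (by linarith) hB0
  have hθm : P.real {ω | f ω < s} + θ * P.real {ω | f ω = s} = m := by
    rcases hB0.eq_or_lt with h | h
    · rw [← h]; linarith
    · rw [hθ, div_mul_cancel₀ _ h.ne']; ring
  set w : Ω → ℝ := fun ω =>
    Set.indicator {ω | f ω < s} (fun _ => 1) ω + Set.indicator {ω | f ω = s} (fun _ => θ) ω with hw
  have hwm : Measurable w :=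
    (measurable_const.indicator hA).add (measurable_const.indicator hB)
  have hwcase : ∀ ω, (f ω < s ∧ w ω = 1) ∨ (f ω = s ∧ w ω = θ) ∨ (s < f ω ∧ w ω = 0) := by
    intro ω
    rcases lt_trichotomy (f ω) s with h | h | h
    · left; simp [hw, h, h.ne]
    · right; left; simp [hw, h]
    · right; right; simp [hw, h, h.ne', h.le]
  have hw0 : ∀ ω, 0 ≤ w ω := fun ω => by
    rcases hwcase ω with ⟨-, h⟩ | ⟨-, h⟩ | ⟨-, h⟩ <;> rw [h] <;> linarith
  have hw1 : ∀ ω, w ω ≤ 1 := fun ω => by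
    rcases hwcase ω with ⟨-, h⟩ | ⟨-, h⟩ | ⟨-, h⟩ <;> rw [h] <;> linarith
  have hwi : Integrable w P := by
    refine Integrable.of_bound hwm.aestronglyMeasurable 1 (ae_of_all _ fun ω => ?_)
    rw [Real.norm_of_nonneg (hw0 ω)]
    exact hw1 ω
  have hwint : ∫ ω, w ω ∂P = m := by
    rw [hw, integral_add ((integrable_const _).indicator hA) ((integrable_const _).indicator hB),
      integral_indicator_const _ hA, integral_indicator_const _ hB, ← hθm]
    simp [mul_comm]
  have hdm : Measurable fun ω => ENNReal.ofReal (w ω / m) := (hwm.div_const m).ennreal_ofReal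
  refine ⟨P.withDensity fun ω => ENNReal.ofReal (w ω / m), s, ?_, ?_, ?_⟩
  · constructor
    rw [withDensity_apply _ MeasurableSet.univ, Measure.restrict_univ,
      ← ofReal_integral_eq_lintegral_ofReal (hwi.div_const m)
        (ae_of_all _ fun ω => div_nonneg (hw0 ω) hm0.le), integral_div, hwint, div_self hm0.ne',
      ENNReal.ofReal_one]
  · rw [← withDensity_const]
    refine withDensity_mono (ae_of_all _ fun ω => ENNReal.ofReal_le_ofReal ?_)
    have := hw1 ω
    gcongr
  · rw [integral_withDensity_eq_integral_toReal_smul hdm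
      (ae_of_all _ fun ω => ENNReal.ofReal_lt_top), ← integral_const_mul]
    have hpt : ∀ ω, m * ((ENNReal.ofReal (w ω / m)).toReal • f ω)
        = w ω * s - max (s - f ω) 0 := by
      intro ω
      rw [ENNReal.toReal_ofReal (div_nonneg (hw0 ω) hm0.le), smul_eq_mul, ← mul_assoc,
        mul_div_cancel₀ _ hm0.ne']
      rcases hwcase ω with ⟨h, h'⟩ | ⟨h, h'⟩ | ⟨h, h'⟩
      · rw [h', max_eq_left (by linarith)]; ring
      · rw [h', h]; simp
      · rw [h', max_eq_right (by linarith)]; ring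
    simp_rw [hpt]
    have hmax : Integrable (fun ω => max (s - f ω) 0) P :=
      ((integrable_const s).sub hfi).pos_part
    rw [integral_sub (hwi.mul_const s) hmax, integral_mul_const, hwint]

lemma intervalIntegral_cdf_le {Ω : Type*} [MeasurableSpace Ω] (P : Measure Ω)
    [IsProbabilityMeasure P] {f : Ω → ℝ} (hf : Measurable f) (hfi : Integrable f P) {u s : ℝ}
    (hus : u ≤ s) :
    ∫ t in u..s, P.real {ω | f ω ≤ t} ≤ ∫ ω, max (s - f ω) 0 ∂P := by
  have hset : MeasurableSet {x : ℝ × Ω | f x.2 ≤ x.1} :=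
    measurableSet_le (hf.comp measurable_snd) measurable_fst
  set g : ℝ → Ω → ℝ := fun t ω => Set.indicator {x : ℝ × Ω | f x.2 ≤ x.1} (fun _ => 1) (t, ω)
    with hg
  have hgi : Integrable (Function.uncurry g) ((volume.restrict (Set.uIoc u s)).prod P) := by
    have : Function.uncurry g = Set.indicator {x : ℝ × Ω | f x.2 ≤ x.1} (fun _ => (1 : ℝ)) := by
      ext ⟨t, ω⟩; rfl
    have hfin : IsFiniteMeasure (volume.restrict (Set.uIoc u s)) :=
      ⟨by rw [Measure.restrict_apply_univ, Set.uIoc_of_le hus]; exact measure_Ioc_lt_top⟩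
    rw [this]
    exact (integrable_const _).indicator hset
  have h1 : ∀ t, ∫ ω, g t ω ∂P = P.real {ω | f ω ≤ t} := by
    intro t
    have : (fun ω => g t ω) = Set.indicator {ω | f ω ≤ t} 1 := by
      ext ω; simp [hg, Set.indicator]
    rw [this, integral_indicator_one (measurableSet_le hf measurable_const)]
  simp_rw [← h1]
  rw [intervalIntegral_integral_swap hgi]
  refine integral_mono_of_nonneg (ae_of_all _ fun ω => ?_)
    (((integrable_const s).sub hfi).pos_part) (ae_of_all _ fun ω => ?_)
  · refine intervalIntegral.integral_nonneg hus fun t _ => ?_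
    exact Set.indicator_nonneg (fun _ _ => zero_le_one) _
  · show ∫ t in u..s, g t ω ≤ max (s - f ω) 0
    have : (fun t => g t ω) = Set.indicator (Set.Ici (f ω)) 1 := by
      ext t; simp [hg, Set.indicator]
    rw [this, intervalIntegral.integral_of_le hus, integral_indicator_one measurableSet_Ici,
      measureReal_restrict_apply measurableSet_Ici, ← Real.volume_real_Icc]
    refine measureReal_mono ?_ (by simp)
    rintro t ⟨h1, h2⟩
    exact ⟨h1, h2.2⟩

lemma IsDeletion.map {Ω : Type*} [MeasurableSpace Ω] {P P' : Measure Ω} [IsFiniteMeasure P]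
    {η : ℝ} (hη : η < 1) (h : P' ≤ ENNReal.ofReal (1 / (1 - η)) • P) {g : Ω → ℝ}
    (hg : Measurable g) : IsDeletion (P'.map g) (P.map g) η := by
  intro A hA
  rw [Measure.map_apply hg hA, Measure.map_apply hg hA]
  have h1 := h (g ⁻¹' A)
  rw [Measure.smul_apply, smul_eq_mul] at h1
  have h2 := ENNReal.toReal_mono (by finiteness) h1
  rw [ENNReal.toReal_mul, ENNReal.toReal_ofReal (by
    have : 0 < 1 - η := by linarith
    positivity)] at h2
  calc _ ≤ _ := h2
    _ = _ := by ring

/-- Conditioning on an event of probability at least `1/2` is a `1/2`-deletion, so resilience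
bounds the integral of `x` over every such event. -/
lemma MeanResilient1.abs_setIntegral_le {ρ : ℝ → ℝ} {μ : Measure ℝ} [IsProbabilityMeasure μ]
    (h : MeanResilient1 ρ μ) {A : Set ℝ} (hA : MeasurableSet A) (hμA : 1 / 2 ≤ μ.real A) :
    |∫ x in A, x ∂μ| ≤ |∫ x, x ∂μ| + ρ (1 / 2) := by
  have hpos : 0 < μ.real A := by linarith
  have hne : μ A ≠ 0 := fun h0 => by simp [measureReal_def, h0] at hpos
  have hprob : IsProbabilityMeasure (ProbabilityTheory.cond μ A) :=
    ProbabilityTheory.cond_isProbabilityMeasure hne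
  have hdel : IsDeletion (ProbabilityTheory.cond μ A) μ (1 / 2) := by
    intro B _
    change (ProbabilityTheory.cond μ A).real B ≤ μ.real B / (1 - 1 / 2)
    rw [measureReal_def, ProbabilityTheory.cond_apply hA, ENNReal.toReal_mul, ENNReal.toReal_inv]
    change (μ.real A)⁻¹ * μ.real (A ∩ B) ≤ _
    have h1 : μ.real (A ∩ B) ≤ μ.real B := measureReal_mono Set.inter_subset_right
    have h2 : (μ.real A)⁻¹ ≤ 2 := by
      rw [inv_le_comm₀ hpos (by norm_num)]; linarith
    have h3 : (0 : ℝ) ≤ μ.real (A ∩ B) := measureReal_nonneg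
    calc (μ.real A)⁻¹ * μ.real (A ∩ B) ≤ 2 * μ.real B := by gcongr
      _ = _ := by ring
  have h1 := h (1 / 2) ⟨by norm_num, by norm_num⟩ _ hprob hdel
  have h2 : ∫ x, x ∂(ProbabilityTheory.cond μ A) = (μ.real A)⁻¹ * ∫ x in A, x ∂μ := by
    rw [ProbabilityTheory.cond, integral_smul_measure, ENNReal.toReal_inv]
    rfl
  have h3 : ∫ x in A, x ∂μ = μ.real A * ∫ x, x ∂(ProbabilityTheory.cond μ A) := by
    rw [h2]; field_simp
  rw [h3, abs_mul, abs_of_pos hpos]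
  have h4 : μ.real A ≤ 1 := measureReal_le_one
  calc _ ≤ 1 * |∫ x, x ∂(ProbabilityTheory.cond μ A)| := by gcongr
    _ ≤ _ := by
      rw [one_mul]
      have := abs_sub_abs_le_abs_sub (∫ x, x ∂(ProbabilityTheory.cond μ A)) (∫ x, x ∂μ)
      linarith

/-- Resilience forces a finite first moment: once `[-k, k]` has mass at least `1/2`, the integrals
of `x` over `[-k, n]` and `[-n, k]` are bounded uniformly in `n`, and these control
`∫ |x|` over `[-n, n]`. -/
lemma MeanResilient1.integrable {ρ : ℝ → ℝ} {μ : Measure ℝ} [IsProbabilityMeasure μ]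
    (h : MeanResilient1 ρ μ) : Integrable (fun x : ℝ => x) μ := by
  have hmono : Monotone fun n : ℕ => Set.Icc (-(n : ℝ)) n := fun i j hij =>
    Set.Icc_subset_Icc (by simpa using hij) (by simpa using hij)
  have hunion : ⋃ n : ℕ, Set.Icc (-(n : ℝ)) n = Set.univ := by
    refine Set.eq_univ_of_forall fun x => ?_
    obtain ⟨n, hn⟩ := exists_nat_ge |x|
    exact Set.mem_iUnion.2 ⟨n, abs_le.1 hn⟩
  have htend := tendsto_measure_iUnion_atTop (μ := μ) hmono
  rw [hunion, measure_univ] at htend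
  obtain ⟨k, hk⟩ := (htend.eventually_const_lt
    (show ENNReal.ofReal (1 / 2) < 1 by simp)).exists
  have hk' : 1 / 2 ≤ μ.real (Set.Icc (-(k : ℝ)) k) :=
    (ENNReal.ofReal_le_iff_le_toReal (measure_ne_top _ _)).1 hk.le
  set C := |∫ x, x ∂μ| + ρ (1 / 2) with hC
  have hint : ∀ u v : ℝ, IntegrableOn (fun x : ℝ => x) (Set.Icc u v) μ := fun u v =>
    continuous_id.continuousOn.integrableOn_compact isCompact_Icc
  have hk0 : (0 : ℝ) ≤ k := Nat.cast_nonneg k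
  -- On `[-k, n]` one has `|x| ≤ x + 2k`, and on `[-n, k]` one has `|x| ≤ -x + 2k`.
  have key : ∀ (A : Set ℝ) (c : ℝ), |c| = 1 → MeasurableSet A → Set.Icc (-(k : ℝ)) k ⊆ A →
      IntegrableOn (fun x : ℝ => x) A μ → (∀ x ∈ A, |x| ≤ c * x + 2 * k) →
      ∫ x in A, ‖x‖ ∂μ ≤ C + 2 * k := by
    intro A c hc hA hsub hi hb
    have h1 := h.abs_setIntegral_le hA (hk'.trans (measureReal_mono hsub))
    calc ∫ x in A, ‖x‖ ∂μ ≤ ∫ x in A, (c * x + 2 * k) ∂μ :=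
          setIntegral_mono_on hi.norm ((hi.const_mul c).add (integrable_const _)) hA hb
      _ = c * ∫ x in A, x ∂μ + μ.real A * (2 * k) := by
          rw [integral_add (hi.const_mul c) (integrable_const _), integral_const_mul]
          simp
      _ ≤ C + 1 * (2 * k) := by
          have h2 : c * ∫ x in A, x ∂μ ≤ |∫ x in A, x ∂μ| := by
            refine (le_abs_self _).trans ?_
            rw [abs_mul, hc, one_mul]
          have h3 : μ.real A * (2 * k) ≤ 1 * (2 * k) := by
            have : μ.real A ≤ 1 := measureReal_le_one
            gcongr
          linarith
      _ = _ := by ring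
  refine (aecover_Icc (μ := μ) (l := Filter.atTop) (a := fun n : ℕ => -(n : ℝ))
    (b := fun n : ℕ => (n : ℝ)) (Filter.tendsto_neg_atTop_atBot.comp tendsto_natCast_atTop_atTop)
    tendsto_natCast_atTop_atTop).integrable_of_integral_norm_bounded
      ((C + 2 * k) + (C + 2 * k)) (fun n => hint _ _) ?_
  filter_upwards [Filter.eventually_ge_atTop k] with n hn
  have hn' : (k : ℝ) ≤ n := by exact_mod_cast hn
  have hcov : Set.Icc (-(n : ℝ)) n = Set.Icc (-(n : ℝ)) k ∪ Set.Icc (-(k : ℝ)) n := by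
    ext x
    simp only [Set.mem_Icc, Set.mem_union]
    constructor
    · rintro ⟨h1, h2⟩
      rcases le_total x k with h3 | h3
      · exact Or.inl ⟨h1, h3⟩
      · exact Or.inr ⟨by linarith, h2⟩
    · rintro (⟨h1, h2⟩ | ⟨h1, h2⟩) <;> constructor <;> linarith
  have hL := key (Set.Icc (-(n : ℝ)) k) (-1) (by simp) measurableSet_Icc
    (Set.Icc_subset_Icc (by linarith) le_rfl) (hint _ _) (fun x hx => by
      rw [abs_le]; constructor <;> linarith [hx.1, hx.2])
  have hR := key (Set.Icc (-(k : ℝ)) n) 1 (by simp) measurableSet_Icc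
    (Set.Icc_subset_Icc le_rfl (by linarith)) (hint _ _) (fun x hx => by
      rw [abs_le]; constructor <;> linarith [hx.1, hx.2])
  rw [hcov]
  calc _ ≤ _ := integral_mono_measure (Measure.restrict_union_le _ _)
        (ae_of_all _ fun x => norm_nonneg x) ((hint _ _).norm.add_measure (hint _ _).norm)
    _ = _ := integral_add_measure (hint _ _).norm (hint _ _).norm
    _ ≤ _ := add_le_add hL hR

/-- If the distribution function of `f` under `P` is nowhere smaller than that of `g` under `Q` by
more than `η`, then `P` truncated to its lowest `f`-values has `f`-mean at most the `g`-mean of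
`Q` truncated to its highest `g`-values. -/
lemma exists_truncations {Ω Ω' : Type*} [MeasurableSpace Ω] [MeasurableSpace Ω']
    (P : Measure Ω) (Q : Measure Ω') [IsProbabilityMeasure P] [IsProbabilityMeasure Q]
    {f : Ω → ℝ} {g : Ω' → ℝ} (hf : Measurable f) (hg : Measurable g)
    (hfi : Integrable f P) (hgi : Integrable g Q) {η : ℝ} (hη0 : 0 < η) (hη1 : η < 1)
    (hcdf : ∀ t, Q.real {ω | g ω ≤ t} - P.real {ω | f ω ≤ t} ≤ η) :
    ∃ (P' : Measure Ω) (Q' : Measure Ω'), IsProbabilityMeasure P' ∧ IsProbabilityMeasure Q' ∧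
      P' ≤ ENNReal.ofReal (1 / (1 - η)) • P ∧ Q' ≤ ENNReal.ofReal (1 / (1 - η)) • Q ∧
      ∫ ω, f ω ∂P' ≤ ∫ ω, g ω ∂Q' := by
  have hm0 : 0 < 1 - η := by linarith
  obtain ⟨P', s, hP', hPle, hPs⟩ := exists_lower_truncation P hf hfi hm0 (by linarith)
  obtain ⟨Q', s', hQ', hQle, hQs⟩ := exists_lower_truncation Q hg.neg hgi.neg hm0 (by linarith)
  refine ⟨P', Q', hP', hQ', hPle, hQle, ?_⟩
  simp only [Pi.neg_apply, integral_neg] at hQs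
  refine le_of_mul_le_mul_left ?_ hm0
  have hI0 : 0 ≤ ∫ ω, max (s - f ω) 0 ∂P := integral_nonneg fun ω => le_max_right _ _
  have hJ0 : 0 ≤ ∫ ω, max (s' - -g ω) 0 ∂Q := integral_nonneg fun ω => le_max_right _ _
  rcases le_total s (-s') with hss | hss
  · have := mul_le_mul_of_nonneg_left hss hm0.le
    linarith
  · have hI := intervalIntegral_cdf_le P hf hfi hss
    have hJ := intervalIntegral_cdf_le Q hg.neg hgi.neg (show -s ≤ s' by linarith)
    simp only [Pi.neg_apply] at hJ
    have hflip : ∫ t in (-s)..s', Q.real {ω | -g ω ≤ t}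
        = ∫ t in (-s')..s, Q.real {ω | -g ω ≤ -t} := by
      rw [intervalIntegral.integral_comp_neg (fun t => Q.real {ω | -g ω ≤ t}), neg_neg]
    rw [hflip] at hJ
    have hi1 : IntervalIntegrable (fun t => P.real {ω | f ω ≤ t}) volume (-s') s :=
      Monotone.intervalIntegrable fun t u htu =>
        measureReal_mono fun ω (hω : f ω ≤ t) => le_trans hω htu
    have hi2 : IntervalIntegrable (fun t => Q.real {ω | -g ω ≤ -t}) volume (-s') s :=
      Antitone.intervalIntegrable fun t u htu =>
        measureReal_mono fun ω (hω : -g ω ≤ -u) => le_trans hω (neg_le_neg htu)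
    have hlow : ∫ _ in (-s')..s, (1 - η) ≤
        ∫ t in (-s')..s, (P.real {ω | f ω ≤ t} + Q.real {ω | -g ω ≤ -t}) := by
      refine intervalIntegral.integral_mono_on hss (by simp) (hi1.add hi2) fun t _ => ?_
      have h1 : 1 ≤ Q.real {ω | g ω ≤ t} + Q.real {ω | -g ω ≤ -t} := by
        rw [← probReal_univ (μ := Q)]
        refine (measureReal_mono (fun ω _ => ?_)).trans (measureReal_union_le _ _)
        rcases le_total (g ω) t with h | h
        · exact Or.inl h
        · exact Or.inr (neg_le_neg h)
      linarith [hcdf t]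
    rw [intervalIntegral.integral_add hi1 hi2, intervalIntegral.integral_const, smul_eq_mul]
      at hlow
    nlinarith

lemma prod_real_sub_le (μ p : Measure ℝ) [IsProbabilityMeasure μ] [IsProbabilityMeasure p]
    (t : ℝ) : (μ.prod p).real {z | z.1 - z.2 ≤ t} = ∫ x, (μ (Set.Iic (x + t))).toReal ∂p := by
  have hset : MeasurableSet {z : ℝ × ℝ | z.1 - z.2 ≤ t} :=
    measurableSet_le (measurable_fst.sub measurable_snd) measurable_const
  have hm : Measurable fun x => μ (Set.Iic (x + t)) :=
    Monotone.measurable fun x y hxy => measure_mono (Set.Iic_subset_Iic.2 (by linarith))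
  rw [measureReal_def, Measure.prod_apply_symm hset,
    integral_toReal hm.aemeasurable (ae_of_all _ fun x => measure_lt_top _ _)]
  congr 1
  refine lintegral_congr fun x => ?_
  congr 1
  ext z
  simp [add_comm]

/-- **Closeness in smoothed KS distance implies mean cross** (Lemma 1).
If `a·T(x) + b` is the CDF of a random variable `Z` whose law lies in `𝒢_mean(ρ_Z)`, and
`sup_t |E_p[T(X+t)] - E_q[T(X+t)]| ≤ ε` with `|a|ε < 1`, then there are deletions
`r_p ≤ p/(1-|a|ε)` and `r_q ≤ q/(1-|a|ε)` with `E_{r_q}[X] - E_{r_p}[X] ≤ 2 ρ_Z(|a|ε)`. -/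
theorem mean_cross_of_smoothed_KS_close
    (T : ℝ → ℝ) (a b : ℝ) (μZ : Measure ℝ) [IsProbabilityMeasure μZ]
    (hCDF : ∀ x : ℝ, a * T x + b = (μZ (Set.Iic x)).toReal)
    (ρZ : ℝ → ℝ) (hres : MeanResilient1 ρZ μZ)
    (p q : Measure ℝ) [IsProbabilityMeasure p] [IsProbabilityMeasure q]
    (hp : Integrable (fun x : ℝ => x) p) (hq : Integrable (fun x : ℝ => x) q)
    (hTp : ∀ t : ℝ, Integrable (fun x => T (x + t)) p)
    (hTq : ∀ t : ℝ, Integrable (fun x => T (x + t)) q)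
    (ε : ℝ) (hε : 0 ≤ ε) (hae : |a| * ε < 1)
    (hKS : ∀ t : ℝ, |(∫ x, T (x + t) ∂p) - (∫ x, T (x + t) ∂q)| ≤ ε) :
    ∃ (rp rq : Measure ℝ), IsProbabilityMeasure rp ∧ IsProbabilityMeasure rq ∧
      IsDeletion rp p (|a| * ε) ∧ IsDeletion rq q (|a| * ε) ∧
      Integrable (fun x : ℝ => x) rp ∧ Integrable (fun x : ℝ => x) rq ∧
      (∫ x, x ∂rq) - (∫ x, x ∂rp) ≤ 2 * ρZ (|a| * ε) := by
  have hZ : Integrable (fun x : ℝ => x) μZ := hres.integrable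
  set η := |a| * ε with hη
  have hη0 : 0 ≤ η := mul_nonneg (abs_nonneg a) hε
  set W : ℝ × ℝ → ℝ := fun z => z.1 - z.2 with hW
  have hWm : Measurable W := measurable_fst.sub measurable_snd
  have hcdf : ∀ (ν : Measure ℝ) [IsProbabilityMeasure ν],
      (∀ t : ℝ, Integrable (fun x => T (x + t)) ν) → ∀ t,
      (μZ.prod ν).real {z | W z ≤ t} = a * ∫ x, T (x + t) ∂ν + b := by
    intro ν _ hT t
    rw [prod_real_sub_le]
    simp_rw [← hCDF]
    rw [integral_add ((hT t).const_mul a) (integrable_const b), integral_const_mul]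
    simp
  have hclose : ∀ t, |(μZ.prod q).real {z | W z ≤ t} - (μZ.prod p).real {z | W z ≤ t}| ≤ η := by
    intro t
    rw [hcdf p hTp, hcdf q hTq, add_sub_add_right_eq_sub, ← mul_sub, abs_mul, abs_sub_comm]
    exact mul_le_mul_of_nonneg_left (hKS t) (abs_nonneg a)
  have hfst : ∀ (ν : Measure ℝ) [IsProbabilityMeasure ν],
      Integrable (fun z : ℝ × ℝ => z.1) (μZ.prod ν) := fun ν _ => hZ.comp_fst ν
  have hsnd : ∀ (ν : Measure ℝ) [IsProbabilityMeasure ν], Integrable (fun x : ℝ => x) ν →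
      Integrable (fun z : ℝ × ℝ => z.2) (μZ.prod ν) := fun ν _ h => h.comp_snd μZ
  have hWp : Integrable W (μZ.prod p) := (hfst p).sub (hsnd p hp)
  have hWq : Integrable W (μZ.prod q) := (hfst q).sub (hsnd q hq)
  rcases hη0.eq_or_lt with h0 | h0
  · have hself : ∀ ν : Measure ℝ, IsDeletion ν ν η := fun ν A _ => by simp [← h0]
    refine ⟨p, q, inferInstance, inferInstance, hself p, hself q, hp, hq, ?_⟩
    have hlaw : (μZ.prod p).map W = (μZ.prod q).map W := by
      refine Measure.ext_of_Iic _ _ fun t => ?_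
      rw [Measure.map_apply hWm measurableSet_Iic, Measure.map_apply hWm measurableSet_Iic]
      have h1 := hclose t
      rw [← h0] at h1
      have h2 := abs_nonpos_iff.1 h1
      exact (measureReal_eq_measureReal_iff).1 (sub_eq_zero.1 h2).symm
    have hmean : ∀ (ν : Measure ℝ) [IsProbabilityMeasure ν], Integrable (fun x : ℝ => x) ν →
        ∫ x, x ∂((μZ.prod ν).map W) = ∫ x, x ∂μZ - ∫ x, x ∂ν := by
      intro ν _ h
      rw [integral_map hWm.aemeasurable (by fun_prop), integral_sub (hfst ν) (hsnd ν h),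
        integral_fun_fst (fun x : ℝ => x), integral_fun_snd (fun x : ℝ => x)]
      simp
    have h1 := hmean p hp
    have h2 := hmean q hq
    rw [hlaw] at h1
    have h3 := (abs_nonneg _).trans (hres η ⟨hη0, hae⟩ μZ inferInstance (hself μZ))
    linarith
  · obtain ⟨P', Q', hP', hQ', hPle, hQle, hPQ⟩ := exists_truncations (μZ.prod p) (μZ.prod q)
      hWm hWm hWp hWq h0 hae fun t => (le_abs_self _).trans (hclose t)
    -- The properties of the two marginals of a truncated product measure.
    have key : ∀ (ν : Measure ℝ) [IsProbabilityMeasure ν], Integrable (fun x : ℝ => x) ν →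
        ∀ M : Measure (ℝ × ℝ), IsProbabilityMeasure M →
        M ≤ ENNReal.ofReal (1 / (1 - η)) • μZ.prod ν →
        IsProbabilityMeasure (M.map Prod.snd) ∧ IsDeletion (M.map Prod.snd) ν η ∧
        Integrable (fun x : ℝ => x) (M.map Prod.snd) ∧
        ∃ c, |c - ∫ x, x ∂μZ| ≤ ρZ η ∧ ∫ z, W z ∂M = c - ∫ x, x ∂(M.map Prod.snd) := by
      intro ν _ hν M hR hle
      have h1 : Integrable (fun z : ℝ × ℝ => z.1) M :=
        ((hfst ν).smul_measure ENNReal.ofReal_ne_top).mono_measure hle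
      have h2 : Integrable (fun z : ℝ × ℝ => z.2) M :=
        ((hsnd ν hν).smul_measure ENNReal.ofReal_ne_top).mono_measure hle
      have d1 : IsDeletion (M.map Prod.fst) μZ η := by
        simpa using IsDeletion.map hae hle measurable_fst
      have d2 : IsDeletion (M.map Prod.snd) ν η := by
        simpa using IsDeletion.map hae hle measurable_snd
      have i1 : IsProbabilityMeasure (M.map Prod.fst) :=
        Measure.isProbabilityMeasure_map measurable_fst.aemeasurable
      refine ⟨Measure.isProbabilityMeasure_map measurable_snd.aemeasurable, d2, ?_,
        ∫ x, x ∂(M.map Prod.fst), hres η ⟨hη0, hae⟩ _ i1 d1, ?_⟩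
      · exact (integrable_map_measure (by fun_prop) measurable_snd.aemeasurable).2 h2
      · rw [integral_map measurable_fst.aemeasurable (by fun_prop),
          integral_map measurable_snd.aemeasurable (by fun_prop), ← integral_sub h1 h2]
    obtain ⟨p1, p2, p3, c, hc, hcW⟩ := key p hp P' hP' hPle
    obtain ⟨q1, q2, q3, d, hd, hdW⟩ := key q hq Q' hQ' hQle
    refine ⟨P'.map Prod.snd, Q'.map Prod.snd, p1, q1, p2, q2, p3, q3, ?_⟩
    have := abs_le.1 hc
    have := abs_le.1 hd
    linarith
end
end

section
/- Let 𝒢 be a set of probability distributions on ℝ^d containing p★, let p be a distribution with TV(p★, p) ≤ ε, and let p̂_n be any distribution. Let 𝒟 be a family of pairs (d₁, d₂) of measurable functions with |d₂(x)| ≤ 1/2 for all (d₁, d₂) ∈ 𝒟 and all x, and define A(p, q) = sup_{(d₁,d₂)∈𝒟} (E_p[d₁(X)] + E_q[d₂(X)]) and Ā(p, q) = sup_{(d₁,d₂)∈𝒟} |E_p[d₂(X)] − E_q[d₂(X)]|. If q ∈ 𝒢 attains the minimum of A(q', p̂_n) over q' ∈ 𝒢, then A(q, p★) − A(p★, p★)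 ≤ 2ε + 2Ā(p, p̂_n). -/
/-!
Replacing the second argument of `A` moves every value `E_μ[d₁] + E_ν[d₂]` by
`E_ν[d₂] - E_ν'[d₂]`, whatever `μ` is. Between `p★` and `p̂_n` this change is at most
`ε + Ā(p, p̂_n)`: passing from `p★` to `p` costs at most `ε`, because `d₂ + 1/2` takes values in
`[0, 1]` and the layer-cake formula writes its mean as an average over `t ∈ (0, 1]` of
probabilities of superlevel sets (`abs_integral_sub_le_of_tv`); passing from `p` to `p̂_n` costs
at most `Ā(p, p̂_n)` by definition. Hence `A(q, p★) ≤ A(q, p̂_n) + δ ≤ A(p★, p̂_n) + δ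
≤ A(p★, p★) + 2δ` with `δ = ε + Ā(p, p̂_n)`, the middle step being the minimality of `q`.
-/

open MeasureTheory Real

noncomputable section

variable {d : ℕ}

/-- The set of discriminator values `E_p[d₁] + E_q[d₂]` for `(d₁,d₂) ∈ 𝒟`. -/
def ASet (D : Set ((EuclideanSpace ℝ (Fin d) → ℝ) × (EuclideanSpace ℝ (Fin d) → ℝ)))
    (p q : Measure (EuclideanSpace ℝ (Fin d))) : Set ℝ :=
  {s | ∃ dd ∈ D, s = (∫ x, dd.1 x ∂p) + (∫ x, dd.2 x ∂q)}

/-- `A(p,q) = sup_{(d₁,d₂)∈𝒟} (E_p[d₁(X)] + E_q[d₂(X)])`. -/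
def Afun (D : Set ((EuclideanSpace ℝ (Fin d) → ℝ) × (EuclideanSpace ℝ (Fin d) → ℝ)))
    (p q : Measure (EuclideanSpace ℝ (Fin d))) : ℝ := sSup (ASet D p q)

/-- `Ā(p,q) = sup_{(d₁,d₂)∈𝒟} |E_p[d₂(X)] - E_q[d₂(X)]|`. -/
def Abar (D : Set ((EuclideanSpace ℝ (Fin d) → ℝ) × (EuclideanSpace ℝ (Fin d) → ℝ)))
    (p q : Measure (EuclideanSpace ℝ (Fin d))) : ℝ :=
  sSup {s | ∃ dd ∈ D, s = |(∫ x, dd.2 x ∂p) - (∫ x, dd.2 x ∂q)|}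

/-- A total variation bound `ε` controls the difference of the means of any function with values
in an interval of length one. The function is only required to be integrable, so the superlevel
sets in the layer-cake formula are those of a measurable representative common to both measures. -/
lemma abs_integral_sub_le_of_tv {Ω : Type*} [MeasurableSpace Ω] (μ ν : Measure Ω)
    [IsProbabilityMeasure μ] [IsProbabilityMeasure ν] (ε : ℝ)
    (hTV : ∀ A : Set Ω, MeasurableSet A → |(μ A).toReal - (ν A).toReal| ≤ ε)
    (f : Ω → ℝ) (hfμ : Integrable f μ) (hfν : Integrable f ν) (hf : ∀ x, |f x| ≤ 1 / 2) :
    |(∫ x, f x ∂μ) - (∫ x, f x ∂ν)| ≤ ε := by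
  obtain ⟨g, hg, hfg⟩ := (hfμ.add_measure hfν).aestronglyMeasurable
  obtain ⟨hgμ, hgν⟩ := ae_add_measure_iff.1 hfg
  have hgm : Measurable g := hg.measurable
  have layer : ∀ ρ : Measure Ω, IsProbabilityMeasure ρ → Integrable f ρ →
      (∀ᵐ x ∂ρ, f x = g x) →
      ∫ x, f x ∂ρ = (∫ t in Set.Ioc (0 : ℝ) 1, ρ.real {x | t ≤ g x + 1 / 2}) - 1 / 2 := by
    intro ρ hρ hfρ hae
    have hgi : Integrable g ρ := hfρ.congr hae
    have hcake := Integrable.integral_eq_integral_Ioc_meas_le (μ := ρ) (M := 1)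
      (f := fun x => g x + 1 / 2) (hgi.add (integrable_const _))
      (by filter_upwards [hae] with x hx
          have := abs_le.1 (hf x)
          simp only [Pi.zero_apply]
          linarith)
      (by filter_upwards [hae] with x hx
          have := abs_le.1 (hf x)
          linarith)
    rw [← hcake, integral_add hgi (integrable_const _), integral_congr_ae hae]
    simp
  have hanti : ∀ ρ : Measure Ω, IsProbabilityMeasure ρ →
      IntegrableOn (fun t : ℝ => ρ.real {x | t ≤ g x + 1 / 2}) (Set.Ioc 0 1) := by
    intro ρ hρ
    have h : Antitone (fun t : ℝ => ρ.real {x | t ≤ g x + 1 / 2}) :=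
      fun s t hst => measureReal_mono fun x hx => le_trans hst hx
    exact (h.antitoneOn _).integrableOn_isCompact (isCompact_Icc (a := 0) (b := 1))
      |>.mono_set Set.Ioc_subset_Icc_self
  rw [layer μ inferInstance hfμ hgμ, layer ν inferInstance hfν hgν, sub_sub_sub_cancel_right,
    ← integral_sub (hanti μ inferInstance) (hanti ν inferInstance), ← Real.norm_eq_abs]
  have hbound := norm_setIntegral_le_of_norm_le_const (μ := (volume : Measure ℝ))
    (s := Set.Ioc (0 : ℝ) 1) (C := ε)
    (f := fun t : ℝ => μ.real {x | t ≤ g x + 1 / 2} - ν.real {x | t ≤ g x + 1 / 2})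
    (by simp) (fun t _ => hTV _ (measurableSet_le measurable_const (hgm.add_const _)))
  simpa using hbound

/-- A uniform bound on the change of `E[d₂]` bounds the change of `A` in its second argument. -/
lemma Afun_le_add_of_integral_le
    (D : Set ((EuclideanSpace ℝ (Fin d) → ℝ) × (EuclideanSpace ℝ (Fin d) → ℝ)))
    (hD : D.Nonempty) (μ ν ν' : Measure (EuclideanSpace ℝ (Fin d)))
    (hBdd : BddAbove (ASet D μ ν')) (δ : ℝ)
    (h : ∀ dd ∈ D, (∫ x, dd.2 x ∂ν) ≤ (∫ x, dd.2 x ∂ν') + δ) :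
    Afun D μ ν ≤ Afun D μ ν' + δ := by
  obtain ⟨d₀, hd₀⟩ := hD
  refine csSup_le ⟨_, d₀, hd₀, rfl⟩ ?_
  rintro s ⟨dd, hdd, rfl⟩
  have h₁ : (∫ x, dd.1 x ∂μ) + (∫ x, dd.2 x ∂ν') ≤ Afun D μ ν' :=
    le_csSup hBdd ⟨dd, hdd, rfl⟩
  linarith [h dd hdd]

/-- If `q` minimizes `A(·, p̂_n)` over `𝒢 ∋ p★` and `TV(p★, p) ≤ ε`, then
`A(q, p★) - A(p★, p★) ≤ 2ε + 2Ā(p, p̂_n)`. -/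
theorem projection_excess_bound
    (G : Set (Measure (EuclideanSpace ℝ (Fin d))))
    (pstar p phat : Measure (EuclideanSpace ℝ (Fin d)))
    [IsProbabilityMeasure pstar] [IsProbabilityMeasure p] [IsProbabilityMeasure phat]
    (hpstar : pstar ∈ G)
    (ε : ℝ)
    (hTV : ∀ A : Set (EuclideanSpace ℝ (Fin d)), MeasurableSet A →
      |(pstar A).toReal - (p A).toReal| ≤ ε)
    (D : Set ((EuclideanSpace ℝ (Fin d) → ℝ) × (EuclideanSpace ℝ (Fin d) → ℝ)))
    (hD : D.Nonempty)
    (hd2 : ∀ dd ∈ D, ∀ x, |dd.2 x| ≤ 1 / 2)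
    (hInt : ∀ dd ∈ D, ∀ μ : Measure (EuclideanSpace ℝ (Fin d)), IsProbabilityMeasure μ →
      Integrable dd.1 μ ∧ Integrable dd.2 μ)
    (hBdd : ∀ μ ν : Measure (EuclideanSpace ℝ (Fin d)), IsProbabilityMeasure μ →
      IsProbabilityMeasure ν → BddAbove (ASet D μ ν))
    (q : Measure (EuclideanSpace ℝ (Fin d))) [IsProbabilityMeasure q]
    (hq : q ∈ G)
    (hmin : ∀ q' ∈ G, Afun D q phat ≤ Afun D q' phat) :
    Afun D q pstar - Afun D pstar pstar ≤ 2 * ε + 2 * Abar D p phat := by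
  have habs : ∀ dd ∈ D, ∀ μ : Measure (EuclideanSpace ℝ (Fin d)), IsProbabilityMeasure μ →
      |∫ x, dd.2 x ∂μ| ≤ 1 / 2 := by
    intro dd hdd μ hμ
    simpa using norm_integral_le_of_norm_le_const (μ := μ) (f := dd.2) (C := 1 / 2)
      (Filter.Eventually.of_forall (hd2 dd hdd))
  have hbar : ∀ dd ∈ D, |(∫ x, dd.2 x ∂p) - (∫ x, dd.2 x ∂phat)| ≤ Abar D p phat := by
    intro dd hdd
    refine le_csSup ⟨1, ?_⟩ ⟨dd, hdd, rfl⟩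
    rintro s ⟨ee, hee, rfl⟩
    have h₁ := abs_le.1 (habs ee hee p inferInstance)
    have h₂ := abs_le.1 (habs ee hee phat inferInstance)
    exact abs_le.2 ⟨by linarith, by linarith⟩
  have htv : ∀ dd ∈ D, |(∫ x, dd.2 x ∂pstar) - (∫ x, dd.2 x ∂p)| ≤ ε := fun dd hdd =>
    abs_integral_sub_le_of_tv pstar p ε hTV dd.2 (hInt dd hdd pstar inferInstance).2
      (hInt dd hdd p inferInstance).2 (hd2 dd hdd)
  have h₁ : Afun D q pstar ≤ Afun D q phat + (ε + Abar D p phat) :=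
    Afun_le_add_of_integral_le D hD q pstar phat (hBdd q phat inferInstance inferInstance) _
      fun dd hdd => by
        linarith [(abs_le.1 (hbar dd hdd)).2, (abs_le.1 (htv dd hdd)).2]
  have h₂ : Afun D pstar phat ≤ Afun D pstar pstar + (ε + Abar D p phat) :=
    Afun_le_add_of_integral_le D hD pstar phat pstar
      (hBdd pstar pstar inferInstance inferInstance) _
      fun dd hdd => by
        linarith [(abs_le.1 (hbar dd hdd)).1, (abs_le.1 (htv dd hdd)).1]
  linarith [hmin pstar hpstar]
end
end

section
/- Let T : ℝ → ℝ and a, b ∈ ℝ be such that x ↦ a·T(x) + b is the cumulative distribution function of a real random variable Z. Let p and q be probability distributions on ℝ and suppose sup_{t∈ℝ} |E_{X∼p}[T(X+t)] − E_{X∼q}[T(X+t)]| ≤ ε. Let Z be independent of X under both p and q. Then sup_{t∈ℝ} |P_{X∼p}(X − Z ≥ t) − P_{X∼q}(X − Z ≥ t)| ≤ |a|·ε, where X − Z denotes the difference of the independent variables X and Z. -/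
/-!
Conditioning on `X = x`, the event `X - Z ≥ t` is `Z ≤ x - t`, whose probability is the CDF value
`a * T (x - t) + b`. Integrating over `X` gives `P(X - Z ≥ t) = a * E[T (X - t)] + b`
(`map_sub_Ici_toReal`). The constant `b` cancels in the difference of the two laws, and the
hypothesis at the shift `-t` bounds the rest by `|a| * ε`.
-/

open MeasureTheory Real

noncomputable section

lemma map_sub_Ici_toReal
    (T : ℝ → ℝ) (a b : ℝ) (μZ : Measure ℝ) [IsProbabilityMeasure μZ]
    (hCDF : ∀ x : ℝ, a * T x + b = (μZ (Set.Iic x)).toReal)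
    (p : Measure ℝ) [IsProbabilityMeasure p] (t : ℝ)
    (hT : Integrable (fun x => T (x + -t)) p) :
    ((Measure.map (fun w : ℝ × ℝ => w.1 - w.2) (p.prod μZ)) (Set.Ici t)).toReal =
      a * (∫ x, T (x + -t) ∂p) + b := by
  have hm : Measurable (fun w : ℝ × ℝ => w.1 - w.2) := by fun_prop
  have hs : MeasurableSet ((fun w : ℝ × ℝ => w.1 - w.2) ⁻¹' Set.Ici t) := hm measurableSet_Ici
  have hsec : ∀ x : ℝ, Prod.mk x ⁻¹' ((fun w : ℝ × ℝ => w.1 - w.2) ⁻¹' Set.Ici t) =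
      Set.Iic (x + -t) := by
    intro x
    ext z
    simp only [Set.mem_preimage, Set.mem_Ici, Set.mem_Iic]
    constructor <;> intro h <;> linarith
  have hmeas := measurable_measure_prodMk_left (ν := μZ) hs
  rw [Measure.map_apply hm measurableSet_Ici, Measure.prod_apply hs,
    ← integral_toReal hmeas.aemeasurable (Filter.Eventually.of_forall fun x => measure_lt_top _ _)]
  simp only [hsec, ← hCDF]
  rw [integral_add (hT.const_mul a) (integrable_const b), integral_const_mul]
  simp

/-- If `a·T(x)+b` is the CDF of `Z`, and `sup_t |E_p[T(X+t)] - E_q[T(X+t)]| ≤ ε`, then the laws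
of `X - Z` (with `X ∼ p`, resp. `X ∼ q`, independent of `Z`) satisfy
`sup_t |P_p(X - Z ≥ t) - P_q(X - Z ≥ t)| ≤ |a| ε`.  The law of `X - Z` is the pushforward of
the independent product measure under `(x, z) ↦ x - z`. -/
theorem smoothed_KS_to_KS_of_difference
    (T : ℝ → ℝ) (a b : ℝ) (μZ : Measure ℝ) [IsProbabilityMeasure μZ]
    (hCDF : ∀ x : ℝ, a * T x + b = (μZ (Set.Iic x)).toReal)
    (p q : Measure ℝ) [IsProbabilityMeasure p] [IsProbabilityMeasure q]
    (hTp : ∀ t : ℝ, Integrable (fun x => T (x + t)) p)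
    (hTq : ∀ t : ℝ, Integrable (fun x => T (x + t)) q)
    (ε : ℝ)
    (hKS : ∀ t : ℝ, |(∫ x, T (x + t) ∂p) - (∫ x, T (x + t) ∂q)| ≤ ε) :
    ∀ t : ℝ,
      |((Measure.map (fun w : ℝ × ℝ => w.1 - w.2) (p.prod μZ)) (Set.Ici t)).toReal -
        ((Measure.map (fun w : ℝ × ℝ => w.1 - w.2) (q.prod μZ)) (Set.Ici t)).toReal|
        ≤ |a| * ε := by
  intro t
  rw [map_sub_Ici_toReal T a b μZ hCDF p t (hTp (-t)),
    map_sub_Ici_toReal T a b μZ hCDF q t (hTq (-t)), add_sub_add_right_eq_sub, ← mul_sub, abs_mul]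
  exact mul_le_mul_of_nonneg_left (hKS (-t)) (abs_nonneg a)
end
end

section
/- Let p̃ and q̃ be probability distributions on ℝ with finite first moments such that sup_{t∈ℝ} |P_{Y∼p̃}(Y ≥ t) − P_{Y∼q̃}(Y ≥ t)| ≤ ε for some ε ∈ [0,1). Then there exist probability distributions r̃_p ≤ p̃/(1−ε) and r̃_q ≤ q̃/(1−ε) such that r̃_q stochastically dominates r̃_p (i.e., P_{r̃_p}(Y ≥ t) ≤ P_{r̃_q}(Y ≥ t) for all t ∈ ℝ), and consequently E_{r̃_p}[Y] ≤ E_{r̃_q}[Y]. The distributions r̃_p and r̃_q can be obtained by deleting probability mass ε from the largest points of p̃ and from the smallest points of q̃, respectively. -/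
/-!
Delete mass `ε` from the top of `ptil` and from the bottom of `qtil`, and renormalise. An atom at
the cut point may have to be split, so the deletion is encoded by a density with values in `[0, 1]`:
`exists_lower_part` gives, for every `m ∈ [0, 1]`, a function `f` of integral `m` that is the
indicator of a lower half-line except possibly at its end point. Such an `f` satisfies, for every
`t`, either `f = 0` on `[t, ∞)` or `f = 1` on `(-∞, t)`.

Use `f` with `m = 1 - ε` for `ptil` and `1 - g`, where `g` has integral `m = ε`, for `qtil`. Writing
`P(t)`, `Q(t)` for the original upper tails, the tails after deletion, multiplied by `1 - ε`, are
either `0` or `P(t) - ε` for the first measure, and either `Q(t)` or `1 - ε` for the second. Since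
`P(t) - ε ≤ Q(t)` and `P(t) ≤ 1`, dominance holds in all four cases. The inequality of means follows
from the layer-cake formula for the positive and negative parts
(`integral_le_of_tail_le`).
-/


open MeasureTheory Real

noncomputable section

/-- A `[0, 1]`-valued density selecting the lowest part, of mass `m`, of a probability measure on
`ℝ`. The last clause says that the density is the indicator of a lower half-line up to its value at
the end point; the half-line may be empty or all of `ℝ`. -/
lemma exists_lower_part (p : Measure ℝ) [IsProbabilityMeasure p] (m : ℝ)
    (h0 : 0 ≤ m) (h1 : m ≤ 1) :
    ∃ f : ℝ → ℝ, Measurable f ∧ (∀ x, 0 ≤ f x) ∧ (∀ x, f x ≤ 1) ∧ ∫ x, f x ∂p = m ∧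
      ∀ t, (∀ x, t ≤ x → f x = 0) ∨ (∀ x, x < t → f x = 1) := by
  rcases h0.eq_or_lt with rfl | h0
  · exact ⟨fun _ => 0, by fun_prop, by simp, by simp, by simp, fun t => by simp⟩
  rcases h1.eq_or_lt with rfl | h1
  · exact ⟨fun _ => 1, by fun_prop, by simp, by simp, by simp, fun t => by simp⟩
  set S : Set ℝ := {x | m ≤ ProbabilityTheory.cdf p x} with hS
  have hne : S.Nonempty := by
    obtain ⟨x, hx⟩ := ((ProbabilityTheory.tendsto_cdf_atTop p).eventually
      (lt_mem_nhds h1)).exists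
    exact ⟨x, hx.le⟩
  have hbd : BddBelow S := by
    obtain ⟨x, hx⟩ := ((ProbabilityTheory.tendsto_cdf_atBot p).eventually
      (gt_mem_nhds h0)).exists
    refine ⟨x, fun y hy => ?_⟩
    by_contra! h
    exact absurd (hy.trans (ProbabilityTheory.monotone_cdf p h.le)) (not_le.2 hx)
  set c := sInf S with hc
  have hup : m ≤ ProbabilityTheory.cdf p c := by
    have hr : Filter.Tendsto (ProbabilityTheory.cdf p) (nhdsWithin c (Set.Ioi c))
        (nhds (ProbabilityTheory.cdf p c)) :=
      ((ProbabilityTheory.cdf p).right_continuous c).mono_left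
        (nhdsWithin_mono _ Set.Ioi_subset_Ici_self)
    refine ge_of_tendsto hr ?_
    filter_upwards [self_mem_nhdsWithin] with y hy
    obtain ⟨z, hz, hzy⟩ := exists_lt_of_csInf_lt hne hy
    exact le_trans hz (ProbabilityTheory.monotone_cdf p hzy.le)
  have hlow : p.real (Set.Iio c) ≤ m := by
    have hl : Function.leftLim (ProbabilityTheory.cdf p) c ≤ m := by
      refine le_of_tendsto ((ProbabilityTheory.monotone_cdf p).tendsto_leftLim c) ?_
      filter_upwards [self_mem_nhdsWithin] with y hy
      by_contra! h
      exact absurd (csInf_le hbd (show y ∈ S from h.le)) (not_le.2 hy)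
    have hI := (ProbabilityTheory.cdf p).measure_Iio
      (ProbabilityTheory.tendsto_cdf_atBot p) c
    rw [ProbabilityTheory.measure_cdf, sub_zero] at hI
    rw [measureReal_def, hI]
    exact ENNReal.toReal_le_of_le_ofReal h0.le (ENNReal.ofReal_le_ofReal hl)
  have hsplit : ProbabilityTheory.cdf p c = p.real (Set.Iio c) + p.real {c} := by
    rw [ProbabilityTheory.cdf_eq_real, ← measureReal_union (by simp) (by simp)]
    congr 1
    ext x; simp [le_iff_eq_or_lt]
  -- the fraction of the atom at `c` that is kept; the junk value `0` is right when there is no atom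
  set θ := (m - p.real (Set.Iio c)) / p.real {c} with hθ
  have hθ0 : 0 ≤ θ := div_nonneg (by linarith) measureReal_nonneg
  have hθ1 : θ ≤ 1 := div_le_one_of_le₀ (by linarith) measureReal_nonneg
  have hθm : p.real {c} * θ = m - p.real (Set.Iio c) := by
    by_cases hz : p.real {c} = 0
    · rw [hz]; linarith
    · rw [hθ]; field_simp
  refine ⟨fun x => (Set.Iio c).indicator (fun _ => 1) x + ({c} : Set ℝ).indicator (fun _ => θ) x,
    ?_, ?_, ?_, ?_, ?_⟩
  · exact (measurable_const.indicator measurableSet_Iio).add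
      (measurable_const.indicator (measurableSet_singleton c))
  · intro x
    exact add_nonneg (Set.indicator_nonneg (by simp) _) (Set.indicator_nonneg (by simp [hθ0]) _)
  · intro x
    rcases lt_trichotomy x c with h | h | h
    · simp [h, h.ne]
    · simp [h, hθ1]
    · simp [h.le, h.ne']
  · rw [integral_add ((integrable_const _).indicator measurableSet_Iio)
      ((integrable_const _).indicator (measurableSet_singleton c)),
      integral_indicator_const _ measurableSet_Iio,
      integral_indicator_const _ (measurableSet_singleton c)]
    simp only [smul_eq_mul, hθm]
    ring
  · intro t
    rcases lt_or_ge c t with h | h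
    · left
      intro x hx
      have : c < x := h.trans_le hx
      simp [this.le, this.ne']
    · right
      intro x hx
      have : x < c := hx.trans_le h
      simp [this, this.ne]

/-- A `[0, 1]`-valued density of integral `1 - ε`, renormalised, gives an `ε`-deletion. -/
lemma exists_deletion_of_density (p : Measure ℝ) [IsProbabilityMeasure p]
    (hp : Integrable (fun x : ℝ => x) p) (ε : ℝ) (hε : ε < 1) (g : ℝ → ℝ) (hg : Measurable g)
    (g0 : ∀ x, 0 ≤ g x) (g1 : ∀ x, g x ≤ 1) (hgi : ∫ x, g x ∂p = 1 - ε) :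
    ∃ r : Measure ℝ, IsProbabilityMeasure r ∧ IsDeletion r p ε ∧
      Integrable (fun x : ℝ => x) r ∧
      ∀ A, MeasurableSet A → (r A).toReal = (∫ x in A, g x ∂p) / (1 - ε) := by
  have hd : 0 < 1 - ε := by linarith
  have hint : Integrable g p := by
    refine Integrable.of_bound hg.aestronglyMeasurable 1 (.of_forall fun x => ?_)
    rw [Real.norm_eq_abs, abs_of_nonneg (g0 x)]
    exact g1 x
  set r := p.withDensity (fun x => ENNReal.ofReal (g x / (1 - ε))) with hr
  have hA : ∀ A, MeasurableSet A → r A = ENNReal.ofReal ((∫ x in A, g x ∂p) / (1 - ε)) := by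
    intro A hA
    rw [hr, withDensity_apply _ hA, ← integral_div,
      ofReal_integral_eq_lintegral_ofReal (hint.integrableOn.div_const _)
        (.of_forall fun x => div_nonneg (g0 x) hd.le)]
  have hA' : ∀ A, MeasurableSet A → (r A).toReal = (∫ x in A, g x ∂p) / (1 - ε) := by
    intro A hm
    rw [hA A hm, ENNReal.toReal_ofReal]
    exact div_nonneg (integral_nonneg g0) hd.le
  refine ⟨r, ⟨?_⟩, ?_, ?_, hA'⟩
  · rw [hA _ MeasurableSet.univ, setIntegral_univ, hgi, div_self hd.ne', ENNReal.ofReal_one]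
  · intro A hm
    rw [hA' A hm]
    gcongr
    calc ∫ x in A, g x ∂p ≤ ∫ x in A, (1 : ℝ) ∂p :=
          integral_mono hint.integrableOn (integrable_const _) g1
      _ = (p A).toReal := by simp [measureReal_def]
  · have hle : r ≤ ENNReal.ofReal (1 / (1 - ε)) • p := by
      rw [hr, ← withDensity_const]
      refine withDensity_mono (.of_forall fun x => ENNReal.ofReal_le_ofReal ?_)
      gcongr
      exact g1 x
    exact (hp.smul_measure ENNReal.ofReal_ne_top).mono_measure hle

/-- First-order stochastic dominance implies the inequality of means. -/
lemma integral_le_of_tail_le (μ ν : Measure ℝ) [IsProbabilityMeasure μ] [IsProbabilityMeasure ν]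
    (hμ : Integrable (fun x : ℝ => x) μ) (hν : Integrable (fun x : ℝ => x) ν)
    (h : ∀ t : ℝ, (μ (Set.Ici t)).toReal ≤ (ν (Set.Ici t)).toReal) :
    ∫ x, x ∂μ ≤ ∫ x, x ∂ν := by
  have hIci : ∀ t : ℝ, μ (Set.Ici t) ≤ ν (Set.Ici t) := fun t =>
    (ENNReal.toReal_le_toReal (measure_ne_top _ _) (measure_ne_top _ _)).1 (h t)
  have hIio : ∀ t : ℝ, ν (Set.Iio t) ≤ μ (Set.Iio t) := fun t => by
    rw [← Set.compl_Ici, prob_compl_eq_one_sub measurableSet_Ici,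
      prob_compl_eq_one_sub measurableSet_Ici]
    exact tsub_le_tsub_left (hIci t) 1
  have hpos : ∀ x : ℝ, ENNReal.ofReal x = ENNReal.ofReal (max x 0) := fun x => by simp
  have hfin : ∀ (ρ : Measure ℝ) (f : ℝ → ℝ), Integrable f ρ →
      ∫⁻ x, ENNReal.ofReal (f x) ∂ρ ≠ ⊤ := fun ρ f hf =>
    (hf.lintegral_lt_top).ne
  rw [integral_eq_lintegral_pos_part_sub_lintegral_neg_part hμ,
    integral_eq_lintegral_pos_part_sub_lintegral_neg_part hν]
  refine sub_le_sub (ENNReal.toReal_mono (hfin _ _ hν) ?_)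
    (ENNReal.toReal_mono (hfin _ _ hμ.neg) ?_)
  · rw [lintegral_congr (μ := μ) hpos, lintegral_congr (μ := ν) hpos]
    rw [lintegral_eq_lintegral_meas_le μ (.of_forall fun x => le_max_right x 0) (by fun_prop),
      lintegral_eq_lintegral_meas_le ν (.of_forall fun x => le_max_right x 0) (by fun_prop)]
    refine setLIntegral_mono' measurableSet_Ioi fun t ht => ?_
    have : {a : ℝ | t ≤ max a 0} = Set.Ici t := by
      ext a; simp [not_le.2 (Set.mem_Ioi.1 ht)]
    rw [this]
    exact hIci t
  · rw [lintegral_congr (μ := μ) fun x => hpos (-x), lintegral_congr (μ := ν) fun x => hpos (-x)]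
    rw [lintegral_eq_lintegral_meas_lt μ (.of_forall fun x => le_max_right (-x) 0) (by fun_prop),
      lintegral_eq_lintegral_meas_lt ν (.of_forall fun x => le_max_right (-x) 0) (by fun_prop)]
    refine setLIntegral_mono' measurableSet_Ioi fun t ht => ?_
    have : {a : ℝ | t < max (-a) 0} = Set.Iio (-t) := by
      ext a
      simp only [Set.mem_ofPred_eq, lt_max_iff, Set.mem_Iio, not_lt.2 (Set.mem_Ioi.1 ht).le,
        or_false]
      exact lt_neg
    rw [this]
    exact hIio (-t)

/-- If two distributions on `ℝ` with finite first moments are `ε`-close in Kolmogorov–Smirnov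
distance (`sup_t |P_p̃(Y ≥ t) - P_q̃(Y ≥ t)| ≤ ε`, `ε ∈ [0,1)`) then there are `ε`-deletions
`r̃_p ≤ p̃/(1-ε)` and `r̃_q ≤ q̃/(1-ε)` such that `r̃_q` stochastically dominates `r̃_p`, and
consequently `E_{r̃_p}[Y] ≤ E_{r̃_q}[Y]`. -/
theorem deletion_stochastic_dominance_of_KS_close
    (ptil qtil : Measure ℝ) [IsProbabilityMeasure ptil] [IsProbabilityMeasure qtil]
    (hp : Integrable (fun x : ℝ => x) ptil) (hq : Integrable (fun x : ℝ => x) qtil)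
    (ε : ℝ) (hε : ε ∈ Set.Ico (0 : ℝ) 1)
    (hKS : ∀ t : ℝ, |(ptil (Set.Ici t)).toReal - (qtil (Set.Ici t)).toReal| ≤ ε) :
    ∃ (rp rq : Measure ℝ), IsProbabilityMeasure rp ∧ IsProbabilityMeasure rq ∧
      IsDeletion rp ptil ε ∧ IsDeletion rq qtil ε ∧
      Integrable (fun x : ℝ => x) rp ∧ Integrable (fun x : ℝ => x) rq ∧
      (∀ t : ℝ, (rp (Set.Ici t)).toReal ≤ (rq (Set.Ici t)).toReal) ∧
      (∫ x, x ∂rp) ≤ ∫ x, x ∂rq := by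
  obtain ⟨hε0, hε1⟩ := hε
  obtain ⟨f, fm, f0, f1, fi, ft⟩ := exists_lower_part ptil (1 - ε) (by linarith) (by linarith)
  obtain ⟨g, gm, g0, g1, gi, gt⟩ := exists_lower_part qtil ε hε0 hε1.le
  have hint : ∀ (ρ : Measure ℝ) [IsProbabilityMeasure ρ] (k : ℝ → ℝ), Measurable k →
      (∀ x, 0 ≤ k x) → (∀ x, k x ≤ 1) → Integrable k ρ := fun ρ _ k hk k0 k1 =>
    Integrable.of_bound hk.aestronglyMeasurable 1 (.of_forall fun x => by
      rw [Real.norm_eq_abs, abs_of_nonneg (k0 x)]; exact k1 x)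
  have hfint := hint ptil f fm f0 f1
  have hgint := hint qtil g gm g0 g1
  have hgi' : ∫ x, (1 - g x) ∂qtil = 1 - ε := by
    rw [integral_sub (integrable_const _) hgint, gi]; simp
  obtain ⟨rp, hrp, hdp, hip, htp⟩ := exists_deletion_of_density ptil hp ε hε1 f fm f0 f1 fi
  obtain ⟨rq, hrq, hdq, hiq, htq⟩ := exists_deletion_of_density qtil hq ε hε1 (fun x => 1 - g x)
    (by fun_prop) (fun x => by linarith [g1 x]) (fun x => by linarith [g0 x]) hgi'
  have hdom : ∀ t : ℝ, (rp (Set.Ici t)).toReal ≤ (rq (Set.Ici t)).toReal := by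
    intro t
    rw [htp _ measurableSet_Ici, htq _ measurableSet_Ici]
    refine div_le_div_of_nonneg_right ?_ (by linarith)
    have hP : ∫ x in Set.Ici t, f x ∂ptil ≤ 0 ∨
        ∫ x in Set.Ici t, f x ∂ptil = (ptil (Set.Ici t)).toReal - ε := by
      rcases ft t with h | h
      · left
        rw [setIntegral_congr_fun (g := fun _ => (0 : ℝ)) measurableSet_Ici fun x hx => h x hx]
        simp
      · right
        have hs := integral_add_compl (measurableSet_Ici (a := t)) hfint
        rw [Set.compl_Ici, fi, setIntegral_congr_fun (g := fun _ => (1 : ℝ)) measurableSet_Iio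
          fun x hx => h x hx, setIntegral_const] at hs
        have hc := probReal_compl_eq_one_sub (μ := ptil) (measurableSet_Ici (a := t))
        rw [Set.compl_Ici] at hc
        rw [hc, measureReal_def, smul_eq_mul, mul_one] at hs
        linarith
    have hQ : ∫ x in Set.Ici t, (1 - g x) ∂qtil = (qtil (Set.Ici t)).toReal ∨
        ∫ x in Set.Ici t, (1 - g x) ∂qtil = 1 - ε := by
      rcases gt t with h | h
      · left
        rw [setIntegral_congr_fun (g := fun _ => (1 : ℝ)) measurableSet_Ici
          fun x hx => by simp [h x hx]]
        simp [measureReal_def]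
      · right
        rw [← hgi']
        refine setIntegral_eq_integral_of_forall_compl_eq_zero fun x hx => ?_
        rw [h x (by simpa using hx), sub_self]
    have hQ0 : 0 ≤ ∫ x in Set.Ici t, (1 - g x) ∂qtil :=
      integral_nonneg fun x => by simpa using g1 x
    have hP1 : (ptil (Set.Ici t)).toReal ≤ 1 := measureReal_le_one
    have hk := (abs_le.1 (hKS t)).2
    rcases hP with hP | hP
    · exact hP.trans hQ0
    · rcases hQ with hQ | hQ <;> rw [hP, hQ] <;> linarith
  exact ⟨rp, rq, hrp, hrq, hdp, hdq, hip, hiq, hdom, integral_le_of_tail_le rp rq hip hiq hdom⟩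
end
end
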